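/- Let (X, N, φ, K, *) be a fuzzy strong φ-b-normed linear space whose t-norm * is continuous at (1,1), and let {x_1, …, x_n} be a linearly independent set in X. Then there exist c > 0 and δ ∈ (0,1) such that for every choice of scalars α_1, …, α_n with Σ|α_i| ≠ 0, N(α_1 x_1 + ⋯ + α_n x_n, K·c / φ(1/Σ_{i=1}^n |α_i|)) < 1 − δ. -/

import Mathlib

open Filter Topology

/-- A fuzzy strong φ-b-norm on a real linear space `X`. -/
structure FuzzyStrongPhiBNorm (X : Type*) [AddCommGroup X] [Module ℝ X] where
  N : X → ℝ → ℝ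
  phi : ℝ → ℝ
  K : ℝ
  op : ℝ → ℝ → ℝ
  K_ge_one : 1 ≤ K
  N_nonneg : ∀ x t, 0 ≤ N x t
  N_le_one : ∀ x t, N x t ≤ 1
  phi_even : ∀ t, phi (-t) = phi t
  phi_one : phi 1 = 1
  phi_strictMono : StrictMonoOn phi (Set.Ioi (0:ℝ))
  phi_cont : ContinuousOn phi (Set.Ioi (0:ℝ))
  phi_lim_zero : Tendsto phi (nhdsWithin 0 (Set.Ioi 0)) (nhds 0)
  phi_lim_top : Tendsto phi atTop atTop
  bN1 : ∀ x t, t ≤ 0 → N x t = 0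
  bN2 : ∀ x, (∀ t > 0, N x t = 1) ↔ x = 0
  bN3 : ∀ (c : ℝ) (x : X) (t : ℝ), 0 < t → phi c ≠ 0 → N (c • x) t = N x (t / phi c)
  bN4 : ∀ (x y : X) (s t : ℝ), op (N x s) (N y t) ≤ N (x + y) (s + K * t)
  bN5_mono : ∀ x : X, Monotone (N x)
  bN5_lim : ∀ x : X, Tendsto (N x) atTop (nhds 1)

/-- The t-norm is continuous at (1,1): sequences tending to 1 combine to 1. -/
def ContAtOneOne (op : ℝ → ℝ → ℝ) : Prop :=
  ∀ a b : ℕ → ℝ, Tendsto a atTop (nhds 1) → Tendsto b atTop (nhds 1) →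
    Tendsto (fun n => op (a n) (b n)) atTop (nhds 1)


namespace FuzzyStrongPhiBNorm

variable {X : Type*} [AddCommGroup X] [Module ℝ X] (F : FuzzyStrongPhiBNorm X)

/-- Fuzzy convergence to zero. -/
def Null (z : ℕ → X) : Prop := ∀ t > 0, Tendsto (fun m => F.N (z m) t) atTop (𝓝 1)

lemma phi_pos {s : ℝ} (hs : 0 < s) : 0 < F.phi s := by
  have h2 : F.phi (s / 2) < F.phi s :=
    F.phi_strictMono (Set.mem_Ioi.2 (by positivity)) (Set.mem_Ioi.2 hs) (by linarith)
  refine lt_of_le_of_lt ?_ h2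
  refine le_of_tendsto F.phi_lim_zero ?_
  have : Set.Ioo (0:ℝ) (s / 2) ∈ 𝓝[>] (0:ℝ) := Ioo_mem_nhdsGT (by positivity)
  filter_upwards [this] with u hu
  exact (F.phi_strictMono (Set.mem_Ioi.2 hu.1) (Set.mem_Ioi.2 (by positivity)) hu.2).le

lemma phi_abs (s : ℝ) : F.phi |s| = F.phi s := by
  rcases abs_choice s with h | h <;> rw [h]
  exact F.phi_even s

lemma N_zero {t : ℝ} (ht : 0 < t) : F.N 0 t = 1 := (F.bN2 0).2 rfl t ht

lemma tendsto_smul (x : X) {t : ℝ} (ht : 0 < t) :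
    Tendsto (fun s : ℝ => F.N (s • x) t) (𝓝 0) (𝓝 1) := by
  have key : Tendsto (fun s : ℝ => F.N (s • x) t) (𝓝[≠] 0) (𝓝 1) := by
    have h1 : Tendsto F.phi (𝓝[>] 0) (𝓝[>] 0) := by
      refine tendsto_nhdsWithin_iff.2 ⟨F.phi_lim_zero, ?_⟩
      filter_upwards [self_mem_nhdsWithin] with s hs
      exact F.phi_pos hs
    have h2 : Tendsto (fun s : ℝ => t / F.phi |s|) (𝓝[≠] 0) atTop := by
      have := (tendsto_inv_nhdsGT_zero.comp (h1.comp tendsto_abs_nhdsNE_zero)).const_mul_atTop ht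
      simpa [div_eq_mul_inv, Function.comp_def] using this
    refine ((F.bN5_lim x).comp h2).congr' ?_
    filter_upwards [self_mem_nhdsWithin] with s hs
    have hp := F.phi_pos (abs_pos.2 hs)
    rw [Function.comp_apply, F.phi_abs, F.bN3 s x t ht]
    rw [← F.phi_abs]; exact hp.ne'
  have : ContinuousAt (fun s : ℝ => F.N (s • x) t) 0 := by
    rw [continuousAt_iff_punctured_nhds]
    simpa [F.N_zero ht] using key
  simpa [ContinuousAt, F.N_zero ht] using this

variable {F}

lemma Null.add (hop : ContAtOneOne F.op) {z w : ℕ → X} (hz : F.Null z) (hw : F.Null w) :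
    F.Null (fun m => z m + w m) := by
  intro t ht
  have hK : 0 < F.K := lt_of_lt_of_le one_pos F.K_ge_one
  have h := hop _ _ (hz (t / 2) (by positivity)) (hw (t / 2 / F.K) (by positivity))
  refine tendsto_of_tendsto_of_tendsto_of_le_of_le h tendsto_const_nhds ?_ ?_
  · intro m
    have := F.bN4 (z m) (w m) (t / 2) (t / 2 / F.K)
    rwa [mul_div_cancel₀ _ hK.ne', add_halves] at this
  · intro m
    exact F.N_le_one _ _

lemma Null.sum (hop : ContAtOneOne F.op) {ι : Type*} (s : Finset ι) {z : ι → ℕ → X}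
    (hz : ∀ i, F.Null (z i)) : F.Null (fun m => ∑ i ∈ s, z i m) := by
  classical
  induction s using Finset.induction_on with
  | empty =>
    intro t ht
    simp [F.N_zero ht]
  | insert a s ha ih =>
    simp only [Finset.sum_insert ha]
    exact (hz a).add hop ih

end FuzzyStrongPhiBNorm

open FuzzyStrongPhiBNorm in
lemma stmt9_normalized {X : Type*} [AddCommGroup X] [Module ℝ X]
    (F : FuzzyStrongPhiBNorm X) (hop : ContAtOneOne F.op)
    (n : ℕ) (x : Fin n → X) (hx : LinearIndependent ℝ x) :
    ∃ c > 0, ∃ δ ∈ Set.Ioo (0:ℝ) 1, ∀ β : Fin n → ℝ,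
      (∑ i, |β i|) = 1 → F.N (∑ i, β i • x i) (F.K * c) < 1 - δ := by
  by_contra! hcon
  have hpos : ∀ m : ℕ, (0:ℝ) < 1 / ((m:ℝ) + 1) := fun m => by positivity
  have hδ : ∀ m : ℕ, 1 / (((m + 1 : ℕ):ℝ) + 1) ∈ Set.Ioo (0:ℝ) 1 := by
    intro m
    refine ⟨hpos _, ?_⟩
    rw [div_lt_one (by positivity)]
    push_cast
    have : (0:ℝ) ≤ m := m.cast_nonneg
    linarith
  choose β hβ1 hβ using fun m : ℕ => hcon _ (hpos m) _ (hδ m)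
  have hcpt : IsCompact {b : Fin n → ℝ | ∑ i, |b i| = 1} := by
    refine (isCompact_univ_pi (fun _ : Fin n => isCompact_Icc (a := (-1:ℝ)) (b := 1))).of_isClosed_subset
      (isClosed_eq (by fun_prop) continuous_const) ?_
    intro b hb i _
    have : |b i| ≤ ∑ i, |b i| :=
      Finset.single_le_sum (f := fun i => |b i|) (fun _ _ => abs_nonneg _) (Finset.mem_univ i)
    rw [hb] at this
    exact abs_le.1 this
  obtain ⟨b, hb, ψ, hψ, hlim⟩ := hcpt.tendsto_subseq hβ1
  have hlim1 : Tendsto (fun m : ℕ => 1 / ((m:ℝ) + 1)) atTop (𝓝 0) :=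
    tendsto_one_div_add_atTop_nhds_zero_nat
  have hy : F.Null (fun m => ∑ i, β m i • x i) := by
    intro t ht
    have hl : Tendsto (fun m : ℕ => 1 - 1 / (((m + 1 : ℕ):ℝ) + 1)) atTop (𝓝 1) := by
      simpa using (hlim1.comp (tendsto_add_atTop_nat 1)).const_sub 1
    refine tendsto_of_tendsto_of_tendsto_of_le_of_le' hl tendsto_const_nhds ?_
      (Eventually.of_forall fun m => F.N_le_one _ _)
    have hK : Tendsto (fun m : ℕ => F.K * (1 / ((m:ℝ) + 1))) atTop (𝓝 0) := by
      simpa using hlim1.const_mul F.K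
    filter_upwards [hK.eventually_lt_const ht] with m hm
    exact (hβ m).trans (F.bN5_mono _ hm.le)
  have hy' : F.Null (fun m => ∑ i, β (ψ m) i • x i) :=
    fun t ht => (hy t ht).comp hψ.tendsto_atTop
  have hd : F.Null (fun m => ∑ i, (b i - β (ψ m) i) • x i) := by
    refine Null.sum hop Finset.univ (z := fun i m => (b i - β (ψ m) i) • x i) ?_
    intro i t ht
    refine (F.tendsto_smul (x i) ht).comp ?_
    simpa using ((tendsto_pi_nhds.1 hlim) i).const_sub (b i)
  have hsum := hy'.add hop hd
  have hb0 : ∑ i, b i • x i = 0 := by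
    refine (F.bN2 _).1 fun t ht => ?_
    have h := hsum t ht
    simp only [← Finset.sum_add_distrib, ← add_smul, add_sub_cancel] at h
    exact tendsto_nhds_unique tendsto_const_nhds h
  have hz := Fintype.linearIndependent_iff.1 hx b hb0
  have : ∑ i, |b i| = 1 := hb
  simp [hz] at this

theorem stmt9 {X : Type*} [AddCommGroup X] [Module ℝ X]
    (F : FuzzyStrongPhiBNorm X) (hop : ContAtOneOne F.op)
    (n : ℕ) (x : Fin n → X) (hx : LinearIndependent ℝ x) :
    ∃ c > 0, ∃ δ ∈ Set.Ioo (0:ℝ) 1, ∀ α : Fin n → ℝ,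
      (∑ i, |α i|) ≠ 0 →
      F.N (∑ i, α i • x i) (F.K * c / F.phi (1 / ∑ i, |α i|)) < 1 - δ := by
  obtain ⟨c, hc, δ, hδ, h⟩ := stmt9_normalized F hop n x hx
  refine ⟨c, hc, δ, hδ, fun α hα => ?_⟩
  have hS : 0 < ∑ i, |α i| :=
    lt_of_le_of_ne (Finset.sum_nonneg fun _ _ => abs_nonneg _) (Ne.symm hα)
  have hK : 0 < F.K := lt_of_lt_of_le one_pos F.K_ge_one
  rw [← F.bN3 _ _ _ (mul_pos hK hc) (F.phi_pos (one_div_pos.2 hS)).ne', Finset.smul_sum]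
  simp only [smul_smul]
  refine h (fun i => 1 / (∑ i, |α i|) * α i) ?_
  simp only [abs_mul, ← Finset.mul_sum]
  rw [abs_of_pos (one_div_pos.2 hS), one_div_mul_cancel hα]
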